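/- arXiv:2504.15555 — 2 statements merged into one kernel-verified Lean document; each statement's English description precedes it below -/
import Mathlib

section
/- Let n ≥ 2 and let g̃ : [0,1] → ℝ be a bounded measurable single-peaked function, i.e., there exists m ∈ [0,1] such that g̃ is nondecreasing on [0,m] and nonincreasing on [m,1]. Then there exist 0 ≤ a ≤ S ≤ 1 such that the function P̂ defined by P̂(s) = (1/a)∫_0^a (1−t)^{n−1} dt for s ∈ [0,a) (this case being vacuous if a = 0), P̂(s) = (1−s)^{n−1} for s ∈ [a, S], and P̂(s) = 0 for s ∈ (S, 1], is feasible and maximizes ∫_0^1 g̃(s) P(s) ds over all feasible P. -/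
open MeasureTheory Set

/-- A quantile interim allocation is feasible if it maps `[0,1]` into `[0,1]`, is
nonincreasing, and is weakly majorized by `s ↦ (1−s)^{n−1}` (Border's condition). -/
def Feasible (n : ℕ) (P : ℝ → ℝ) : Prop :=
  (∀ s ∈ Icc (0:ℝ) 1, P s ∈ Icc (0:ℝ) 1) ∧
  AntitoneOn P (Icc (0:ℝ) 1) ∧
  ∀ x ∈ Icc (0:ℝ) 1, (∫ t in (0:ℝ)..x, P t) ≤ ∫ t in (0:ℝ)..x, (1 - t) ^ (n - 1)

/-! Ironing. Choose `a ≥ m` maximizing the average `l` of `g` over `[0, a]`, and let `h` be the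
positive part of the function equal to `l` on `[0, a]` and to `g` afterwards. Then `h` is
nonincreasing and `∫₀ˣ g ≤ ∫₀ˣ h` for all `x`. Such an inequality between primitives survives
multiplication by a nonincreasing nonnegative weight, because the superlevel sets of the weight are
initial intervals; applied with weight `P`, then with weight `h`, it gives
`∫ g P ≤ ∫ h P ≤ ∫ h q`, where `q` is the Border bound. If `l ≤ 0` then `h = 0` and nothing is
bought; otherwise pooling `q` on `[0, a)` and cutting it off where `g` becomes negative gives a
lowball allocation `P̂` with `∫ h q = ∫ g P̂`. -/

section Interval

variable {f g P : ℝ → ℝ} {a b c d l x : ℝ}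

lemma intervalIntegrable_of_mem_Icc (hf : IntervalIntegrable f volume a b)
    (hc : c ∈ Icc a b) (hd : d ∈ Icc a b) : IntervalIntegrable f volume c d :=
  hf.mono_set (uIcc_subset_uIcc (Icc_subset_uIcc hc) (Icc_subset_uIcc hd))

lemma integral_add_integral_of_mem_Icc (hf : IntervalIntegrable f volume a b)
    (hx : x ∈ Icc a b) : (∫ t in a..x, f t) + ∫ t in x..b, f t = ∫ t in a..b, f t :=
  have hab : a ≤ b := hx.1.trans hx.2
  intervalIntegral.integral_add_adjacent_intervals
    (intervalIntegrable_of_mem_Icc hf (left_mem_Icc.2 hab) hx)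
    (intervalIntegrable_of_mem_Icc hf hx (right_mem_Icc.2 hab))

lemma intervalIntegrable_of_antitoneOn (hab : a ≤ b) (hf : AntitoneOn f (Icc a b)) :
    IntervalIntegrable f volume a b :=
  AntitoneOn.intervalIntegrable (by rwa [uIcc_of_le hab])

lemma intervalIntegrable_of_monotoneOn_of_antitoneOn (hx : x ∈ Icc a b)
    (hmono : MonotoneOn f (Icc a x)) (hanti : AntitoneOn f (Icc x b)) :
    IntervalIntegrable f volume a b :=
  have hleft : IntervalIntegrable f volume a x :=
    MonotoneOn.intervalIntegrable (by rwa [uIcc_of_le hx.1])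
  hleft.trans (intervalIntegrable_of_antitoneOn hx.2 hanti)

lemma intervalIntegrable_mul_of_antitoneOn (hab : a ≤ b) (hf : IntervalIntegrable f volume a b)
    (hP : AntitoneOn P (Icc a b)) : IntervalIntegrable (fun s => f s * P s) volume a b := by
  have hPint := intervalIntegrable_of_antitoneOn hab hP
  rw [intervalIntegrable_iff_integrableOn_Ioc_of_le hab] at hf hPint ⊢
  refine hf.mul_bdd (c := max |P b| |P a|) hPint.aestronglyMeasurable ?_
  filter_upwards [ae_restrict_mem measurableSet_Ioc] with s hs
  have hs' := Ioc_subset_Icc_self hs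
  exact abs_le_max_abs_abs (hP hs' (right_mem_Icc.2 hab) hs'.2) (hP (left_mem_Icc.2 hab) hs' hs'.1)

lemma const_mul_sub_le_integral (hab : a ≤ b) (hf : IntervalIntegrable f volume a b)
    (h : ∀ t ∈ Ioo a b, c ≤ f t) : c * (b - a) ≤ ∫ t in a..b, f t := by
  simpa [mul_comm] using
    intervalIntegral.integral_mono_on_of_le_Ioo hab intervalIntegrable_const hf h

lemma integral_le_const_mul_sub (hab : a ≤ b) (hf : IntervalIntegrable f volume a b)
    (h : ∀ t ∈ Ioo a b, f t ≤ c) : ∫ t in a..b, f t ≤ c * (b - a) := by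
  simpa [mul_comm] using
    intervalIntegral.integral_mono_on_of_le_Ioo hab hf intervalIntegrable_const h

lemma intervalAverage_mul_sub (f : ℝ → ℝ) (a b : ℝ) :
    (⨍ t in a..b, f t) * (b - a) = ∫ t in a..b, f t := by
  rcases eq_or_ne a b with rfl | hab
  · simp
  · rw [interval_average_eq_div, div_mul_cancel₀ _ (sub_ne_zero.2 hab.symm)]

lemma intervalAverage_mem_Icc_of_antitoneOn (hab : a < b) (hf : AntitoneOn f (Icc a b)) :
    ⨍ t in a..b, f t ∈ Icc (f b) (f a) := by
  have hint := intervalIntegrable_of_antitoneOn hab.le hf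
  rw [interval_average_eq_div]
  constructor
  · rw [le_div_iff₀ (sub_pos.2 hab)]
    exact const_mul_sub_le_integral hab.le hint fun t ht =>
      hf (Ioo_subset_Icc_self ht) (right_mem_Icc.2 hab.le) ht.2.le
  · rw [div_le_iff₀ (sub_pos.2 hab)]
    exact integral_le_const_mul_sub hab.le hint fun t ht =>
      hf (left_mem_Icc.2 hab.le) (Ioo_subset_Icc_self ht) ht.1.le

lemma integral_le_mul_sub_of_monotoneOn (hf : MonotoneOn f (Icc a b)) (hx : x ∈ Icc a b)
    (h : ∫ t in a..b, f t ≤ l * (b - a)) : ∫ t in a..x, f t ≤ l * (x - a) := by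
  have hab : a ≤ b := hx.1.trans hx.2
  have hint : IntervalIntegrable f volume a b :=
    MonotoneOn.intervalIntegrable (by rwa [uIcc_of_le hab])
  rcases le_total (f x) l with hle | hge
  · exact integral_le_const_mul_sub hx.1
      (intervalIntegrable_of_mem_Icc hint (left_mem_Icc.2 hab) hx)
      fun t ht => (hf ⟨ht.1.le, ht.2.le.trans hx.2⟩ hx ht.2.le).trans hle
  · have htail : l * (b - x) ≤ ∫ t in x..b, f t := const_mul_sub_le_integral hx.2
      (intervalIntegrable_of_mem_Icc hint hx (right_mem_Icc.2 hab))
      fun t ht => hge.trans (hf hx ⟨hx.1.trans ht.1.le, ht.2.le⟩ ht.1.le)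
    linarith [integral_add_integral_of_mem_Icc hint hx]

lemma intervalAverage_mul_le_integral_of_antitoneOn (hf : AntitoneOn f (Icc a b))
    (hx : x ∈ Icc a b) : (⨍ t in a..b, f t) * (x - a) ≤ ∫ t in a..x, f t := by
  have h := integral_le_mul_sub_of_monotoneOn (f := fun t => -f t) (l := -⨍ t in a..b, f t)
    hf.neg hx (by rw [intervalIntegral.integral_neg, neg_mul, intervalAverage_mul_sub])
  rw [intervalIntegral.integral_neg, neg_mul] at h
  exact neg_le_neg_iff.1 h

lemma integral_le_integral_of_le_on_Ioc (hf : IntervalIntegrable f volume a b)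
    (hg : IntervalIntegrable g volume a b) (hc : c ∈ Icc a b)
    (hleft : ∀ x ∈ Icc a c, ∫ t in a..x, f t ≤ ∫ t in a..x, g t)
    (hright : ∀ t ∈ Ioc c b, f t ≤ g t) (hx : x ∈ Icc a b) :
    ∫ t in a..x, f t ≤ ∫ t in a..x, g t := by
  rcases le_total x c with hxc | hcx
  · exact hleft x ⟨hx.1, hxc⟩
  have ha : a ∈ Icc a b := left_mem_Icc.2 (hx.1.trans hx.2)
  rw [← integral_add_integral_of_mem_Icc (intervalIntegrable_of_mem_Icc hf ha hx) ⟨hc.1, hcx⟩,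
    ← integral_add_integral_of_mem_Icc (intervalIntegrable_of_mem_Icc hg ha hx) ⟨hc.1, hcx⟩]
  exact add_le_add (hleft c (right_mem_Icc.2 hc.1)) <|
    intervalIntegral.integral_mono_on_of_le_Ioo hcx (intervalIntegrable_of_mem_Icc hf hc hx)
      (intervalIntegrable_of_mem_Icc hg hc hx) fun t ht => hright t ⟨ht.1, ht.2.le.trans hx.2⟩

end Interval

section Majorization

lemma integral_mul_eq_integral_setIntegral_superlevel {α : Type*} [MeasurableSpace α]
    {μ : Measure α} [SFinite μ] {f P : α → ℝ} {M : ℝ} (hf : Integrable f μ)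
    (hP : AEMeasurable P μ) (hPM : ∀ᵐ s ∂μ, P s ∈ Icc 0 M) :
    ∫ s, f s * P s ∂μ = ∫ u in Ioc 0 M, ∫ s in {s | u ≤ P s}, f s ∂μ := by
  -- Fubini applied to the layer-cake representation `P s = ∫₀ᴹ 1_{u ≤ P s} du`
  let K : α → ℝ → ℝ := fun s u => {p : α × ℝ | p.2 ≤ P p.1}.indicator (fun p => f p.1) (s, u)
  have hKint : Integrable (Function.uncurry K) (μ.prod (volume.restrict (Ioc 0 M))) :=
    (hf.comp_fst _).indicator₀ (nullMeasurableSet_le measurable_snd.aemeasurable hP.comp_fst)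
  have hsection_left : ∀ᵐ s ∂μ, f s * P s = ∫ u in Ioc 0 M, K s u := by
    filter_upwards [hPM] with s hs
    have hK : K s = (Iic (P s)).indicator fun _ => f s := rfl
    rw [hK, setIntegral_indicator measurableSet_Iic, Ioc_inter_Iic, min_eq_right hs.2,
      setIntegral_const]
    simp [hs.1, mul_comm]
  have hsection_right (u : ℝ) : ∫ s, K s u ∂μ = ∫ s in {s | u ≤ P s}, f s ∂μ :=
    integral_indicator₀ (nullMeasurableSet_le aemeasurable_const hP)
  rw [integral_congr_ae hsection_left, integral_integral_swap hKint]
  simp only [hsection_right]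

variable {f g P : ℝ → ℝ} {a b : ℝ}

lemma exists_Ioo_subset_subset_Ioc_of_forall_Ioc_subset {L : Set ℝ} (hab : a ≤ b)
    (hLb : L ⊆ Ioc a b) (hL : ∀ s ∈ L, Ioc a s ⊆ L) :
    ∃ x ∈ Icc a b, Ioo a x ⊆ L ∧ L ⊆ Ioc a x := by
  have hbdd : BddAbove (insert a L) := ⟨b, by rintro s (rfl | hs); exacts [hab, (hLb hs).2]⟩
  refine ⟨sSup (insert a L), ⟨le_csSup hbdd (mem_insert a L), ?_⟩, fun s hs => ?_, fun s hs =>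
    ⟨(hLb hs).1, le_csSup hbdd (mem_insert_of_mem a hs)⟩⟩
  · exact csSup_le (insert_nonempty a L) (by rintro s (rfl | hs); exacts [hab, (hLb hs).2])
  · obtain ⟨y, rfl | hy, hsy⟩ := exists_lt_of_lt_csSup (insert_nonempty a L) hs.2
    · exact absurd hs.1 hsy.not_gt
    · exact hL y hy ⟨hs.1, hsy.le⟩

lemma exists_Ioo_subset_superlevel_subset_Ioc (hab : a ≤ b) (hP : AntitoneOn P (Ioc a b)) (u : ℝ) :
    ∃ x ∈ Icc a b, Ioo a x ⊆ {s ∈ Ioc a b | u ≤ P s} ∧ {s ∈ Ioc a b | u ≤ P s} ⊆ Ioc a x :=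
  exists_Ioo_subset_subset_Ioc_of_forall_Ioc_subset hab (sep_subset _ _) fun _ ⟨hs, hus⟩ _ ht =>
    have htb := Ioc_subset_Ioc_right hs.2 ht
    ⟨htb, hus.trans (hP htb hs ht.2)⟩

lemma setIntegral_superlevel_nonpos (hab : a ≤ b) (hP : AntitoneOn P (Ioc a b))
    (h : ∀ x ∈ Icc a b, ∫ t in a..x, f t ≤ 0) (u : ℝ) :
    ∫ s in {s ∈ Ioc a b | u ≤ P s}, f s ≤ 0 := by
  obtain ⟨x, hx, hsub, hsup⟩ := exists_Ioo_subset_superlevel_subset_Ioc hab hP u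
  have hae : ({s ∈ Ioc a b | u ≤ P s} : Set ℝ) =ᵐ[volume] Ioc a x :=
    hsup.eventuallyLE.antisymm (Ioo_ae_eq_Ioc.symm.le.trans hsub.eventuallyLE)
  rw [setIntegral_congr_set hae, ← intervalIntegral.integral_of_le hx.1]
  exact h x hx

lemma integral_mul_nonpos_of_antitoneOn (hab : a ≤ b) (hf : IntervalIntegrable f volume a b)
    (hP : AntitoneOn P (Icc a b)) (hPb : 0 ≤ P b) (h : ∀ x ∈ Icc a b, ∫ t in a..x, f t ≤ 0) :
    ∫ s in a..b, f s * P s ≤ 0 := by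
  have hPint := intervalIntegrable_of_antitoneOn hab hP
  rw [intervalIntegrable_iff_integrableOn_Ioc_of_le hab] at hf hPint
  have hPmem : ∀ᵐ s ∂volume.restrict (Ioc a b), P s ∈ Icc 0 (P a) := by
    filter_upwards [ae_restrict_mem measurableSet_Ioc] with s hs
    have hs' := Ioc_subset_Icc_self hs
    exact ⟨hPb.trans (hP hs' (right_mem_Icc.2 hab) hs'.2), hP (left_mem_Icc.2 hab) hs' hs'.1⟩
  have hPmeas := hPint.aestronglyMeasurable.aemeasurable
  rw [intervalIntegral.integral_of_le hab,
    integral_mul_eq_integral_setIntegral_superlevel hf hPmeas hPmem]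
  refine setIntegral_nonpos measurableSet_Ioc fun u _ => ?_
  rw [Measure.restrict_restrict₀ (nullMeasurableSet_le aemeasurable_const hPmeas),
    inter_comm]
  exact setIntegral_superlevel_nonpos hab (hP.mono Ioc_subset_Icc_self) h u

theorem integral_mul_le_integral_mul_of_antitoneOn (hab : a ≤ b)
    (hf : IntervalIntegrable f volume a b) (hg : IntervalIntegrable g volume a b)
    (hP : AntitoneOn P (Icc a b)) (hPb : 0 ≤ P b)
    (h : ∀ x ∈ Icc a b, ∫ t in a..x, f t ≤ ∫ t in a..x, g t) :
    ∫ s in a..b, f s * P s ≤ ∫ s in a..b, g s * P s := by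
  have hdiff : ∫ s in a..b, (f s - g s) * P s ≤ 0 := by
    refine integral_mul_nonpos_of_antitoneOn hab (hf.sub hg) hP hPb fun x hx => ?_
    have ha : a ∈ Icc a b := left_mem_Icc.2 hab
    rw [intervalIntegral.integral_sub (intervalIntegrable_of_mem_Icc hf ha hx)
      (intervalIntegrable_of_mem_Icc hg ha hx)]
    exact sub_nonpos.2 (h x hx)
  simp only [sub_mul] at hdiff
  rwa [intervalIntegral.integral_sub (intervalIntegrable_mul_of_antitoneOn hab hf hP)
    (intervalIntegrable_mul_of_antitoneOn hab hg hP), sub_nonpos] at hdiff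

end Majorization

section Allocation

variable {q : ℝ → ℝ} {a S s : ℝ}

/-- Feasibility of a quantile allocation `P` with an arbitrary bound `q` in place of Border's
`(1 - t) ^ (n - 1)`: `P` is `[0, 1]`-valued, nonincreasing, and weakly majorized by `q`. -/
def FeasibleUnder (q P : ℝ → ℝ) : Prop :=
  (∀ s ∈ Icc (0 : ℝ) 1, P s ∈ Icc (0 : ℝ) 1) ∧
  AntitoneOn P (Icc (0 : ℝ) 1) ∧
  ∀ x ∈ Icc (0 : ℝ) 1, (∫ t in (0 : ℝ)..x, P t) ≤ ∫ t in (0 : ℝ)..x, q t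

/-- The allocation of a lowball lottery auction: `q` averaged over `[0, a)` (the floor price),
unchanged on `[a, S]`, and zero beyond the reserve quantile `S`. -/
noncomputable def lowballAllocation (q : ℝ → ℝ) (a S s : ℝ) : ℝ :=
  if s < a then ⨍ t in (0 : ℝ)..a, q t else if s ≤ S then q s else 0

lemma lowballAllocation_of_lt (h : s < a) :
    lowballAllocation q a S s = ⨍ t in (0 : ℝ)..a, q t :=
  if_pos h

lemma lowballAllocation_of_mem_Icc (h : s ∈ Icc a S) : lowballAllocation q a S s = q s := by
  rw [lowballAllocation, if_neg h.1.not_gt, if_pos h.2]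

lemma lowballAllocation_of_gt (haS : a ≤ S) (h : S < s) : lowballAllocation q a S s = 0 := by
  rw [lowballAllocation, if_neg (haS.trans_lt h).not_gt, if_neg h.not_ge]

lemma lowballAllocation_mem_Icc (hq : AntitoneOn q (Icc 0 1))
    (hq01 : MapsTo q (Icc 0 1) (Icc 0 1)) (ha : a ≤ 1) (hs : s ∈ Icc (0 : ℝ) 1) :
    lowballAllocation q a S s ∈ Icc (0 : ℝ) 1 := by
  rw [lowballAllocation]
  split_ifs with hsa
  · have ha0 : 0 < a := hs.1.trans_lt hsa
    have havg := intervalAverage_mem_Icc_of_antitoneOn ha0 (hq.mono (Icc_subset_Icc_right ha))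
    exact ⟨(hq01 ⟨ha0.le, ha⟩).1.trans havg.1, havg.2.trans (hq01 ⟨le_rfl, zero_le_one⟩).2⟩
  · exact hq01 hs
  · exact ⟨le_rfl, zero_le_one⟩

lemma antitoneOn_lowballAllocation (hq : AntitoneOn q (Icc 0 1))
    (hq0 : ∀ s ∈ Icc (0 : ℝ) 1, 0 ≤ q s) (ha : a ≤ 1) :
    AntitoneOn (lowballAllocation q a S) (Icc 0 1) := by
  intro x hx y hy hxy
  have hle_avg (hxa : x < a) : q a ≤ ⨍ t in (0 : ℝ)..a, q t :=
    (intervalAverage_mem_Icc_of_antitoneOn (hx.1.trans_lt hxa)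
      (hq.mono (Icc_subset_Icc_right ha))).1
  have ha_mem (hxa : x < a) : a ∈ Icc (0 : ℝ) 1 := ⟨hx.1.trans hxa.le, ha⟩
  unfold lowballAllocation
  split_ifs with hya hxa hxS hyS hxa hxS hxa hxS
  · exact le_rfl
  · exact absurd (hxy.trans_lt hya) hxa
  · exact absurd (hxy.trans_lt hya) hxa
  · exact (hq (ha_mem hxa) hy (not_lt.1 hya)).trans (hle_avg hxa)
  · exact hq hx hy hxy
  · exact absurd (hxy.trans hyS) hxS
  · exact (hq0 a (ha_mem hxa)).trans (hle_avg hxa)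
  · exact hq0 x hx
  · exact le_rfl

lemma feasibleUnder_lowballAllocation (hq : AntitoneOn q (Icc 0 1))
    (hq01 : MapsTo q (Icc 0 1) (Icc 0 1)) (ha : a ∈ Icc (0 : ℝ) 1) :
    FeasibleUnder q (lowballAllocation q a S) := by
  have hq0 : ∀ s ∈ Icc (0 : ℝ) 1, 0 ≤ q s := fun s hs => (hq01 hs).1
  have hanti := antitoneOn_lowballAllocation (S := S) hq hq0 ha.2
  refine ⟨fun s hs => lowballAllocation_mem_Icc hq hq01 ha.2 hs, hanti, fun x hx =>
    integral_le_integral_of_le_on_Ioc (intervalIntegrable_of_antitoneOn zero_le_one hanti)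
      (intervalIntegrable_of_antitoneOn zero_le_one hq) ha (fun y hy => ?_) (fun t ht => ?_) hx⟩
  · have hpooled : EqOn (lowballAllocation q a S) (fun _ => ⨍ t in (0 : ℝ)..a, q t) (Ioo 0 y) :=
      fun t ht => lowballAllocation_of_lt (ht.2.trans_le hy.2)
    rw [intervalIntegral.integral_congr_Ioo_of_le hy.1 hpooled, intervalIntegral.integral_const,
      smul_eq_mul, mul_comm]
    exact intervalAverage_mul_le_integral_of_antitoneOn (hq.mono (Icc_subset_Icc_right ha.2)) hy
  · rw [lowballAllocation, if_neg ht.1.not_gt]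
    split_ifs
    · exact le_rfl
    · exact hq0 t ⟨ha.1.trans ht.1.le, ht.2⟩

end Allocation

section Ironing

variable {g q : ℝ → ℝ} {a l m : ℝ}

/-- `[0, a]` is a pooling interval for the virtual surplus `g` at level `l`: the average of `g` over
`[0, a]` is `l`, no initial segment of it has a larger average, and `g ≤ l` beyond it. The level is
kept as data because for `a = 0` the first condition is void. -/
structure IsPoolingInterval (g : ℝ → ℝ) (a l : ℝ) : Prop where
  mem_Icc : a ∈ Icc (0 : ℝ) 1
  integral_eq : ∫ t in (0 : ℝ)..a, g t = l * a
  integral_le : ∀ x ∈ Icc 0 a, ∫ t in (0 : ℝ)..x, g t ≤ l * x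
  le_level : ∀ s ∈ Ioc a 1, g s ≤ l

lemma exists_integral_le_div_mul (hg : IntervalIntegrable g volume 0 1) (hm0 : 0 < m)
    (hm1 : m ≤ 1) : ∃ a ∈ Icc m 1, ∀ x ∈ Icc m 1,
      ∫ t in (0 : ℝ)..x, g t ≤ (∫ t in (0 : ℝ)..a, g t) / a * x := by
  have hpos : ∀ x ∈ Icc m 1, 0 < x := fun x hx => hm0.trans_le hx.1
  have hprim : ContinuousOn (fun x => ∫ t in (0 : ℝ)..x, g t) (Icc m 1) :=
    (intervalIntegral.continuousOn_primitive_interval' hg left_mem_uIcc).mono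
      (by rw [uIcc_of_le zero_le_one]; exact Icc_subset_Icc_left hm0.le)
  obtain ⟨a, ha, hmax⟩ := isCompact_Icc.exists_isMaxOn (nonempty_Icc.2 hm1)
    (hprim.div continuousOn_id fun x hx => (hpos x hx).ne')
  exact ⟨a, ha, fun x hx => (div_le_iff₀ (hpos x hx)).1 (hmax hx)⟩

lemma le_div_of_integral_le_div_mul (hg : IntervalIntegrable g volume 0 1)
    (hanti : AntitoneOn g (Icc a 1)) (ha0 : 0 < a)
    (hmax : ∀ x ∈ Icc a 1, ∫ t in (0 : ℝ)..x, g t ≤ (∫ t in (0 : ℝ)..a, g t) / a * x)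
    {s : ℝ} (hs : s ∈ Ioc a 1) : g s ≤ (∫ t in (0 : ℝ)..a, g t) / a := by
  have hs' : s ∈ Icc a 1 := Ioc_subset_Icc_self hs
  have ha01 : a ∈ Icc (0 : ℝ) 1 := ⟨ha0.le, hs'.1.trans hs'.2⟩
  have hs01 : s ∈ Icc (0 : ℝ) 1 := ⟨ha0.le.trans hs'.1, hs'.2⟩
  have hsplit := integral_add_integral_of_mem_Icc
    (intervalIntegrable_of_mem_Icc hg (left_mem_Icc.2 zero_le_one) hs01) ⟨ha0.le, hs'.1⟩
  have htail : g s * (s - a) ≤ ∫ t in a..s, g t :=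
    const_mul_sub_le_integral hs'.1 (intervalIntegrable_of_mem_Icc hg ha01 hs01)
      fun t ht => hanti ⟨ht.1.le, ht.2.le.trans hs.2⟩ hs' ht.2.le
  have hlevel := div_mul_cancel₀ (∫ t in (0 : ℝ)..a, g t) ha0.ne'
  refine le_of_mul_le_mul_right ?_ (sub_pos.2 hs.1)
  linarith [hmax s hs']

lemma exists_isPoolingInterval (hm : m ∈ Icc (0 : ℝ) 1) (hmono : MonotoneOn g (Icc 0 m))
    (hanti : AntitoneOn g (Icc m 1)) : ∃ a l : ℝ, m ≤ a ∧ IsPoolingInterval g a l := by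
  have hg := intervalIntegrable_of_monotoneOn_of_antitoneOn hm hmono hanti
  rcases hm.1.eq_or_lt with rfl | hm0
  · refine ⟨0, g 0, le_rfl, hm, by simp, fun x hx => ?_, fun s hs =>
      hanti hm (Ioc_subset_Icc_self hs) hs.1.le⟩
    obtain rfl : x = 0 := le_antisymm hx.2 hx.1
    simp
  obtain ⟨a, ha, hmax⟩ := exists_integral_le_div_mul hg hm0 hm.2
  have ha0 : 0 < a := hm0.trans_le ha.1
  refine ⟨a, (∫ t in (0 : ℝ)..a, g t) / a, ha.1, ⟨ha0.le, ha.2⟩,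
    (div_mul_cancel₀ _ ha0.ne').symm, fun x hx => ?_, fun s hs => ?_⟩
  · rcases le_total m x with hmx | hxm
    · exact hmax x ⟨hmx, hx.2.trans ha.2⟩
    · simpa using integral_le_mul_sub_of_monotoneOn hmono ⟨hx.1, hxm⟩
        (by simpa using hmax m (left_mem_Icc.2 hm.2))
  · exact le_div_of_integral_le_div_mul hg (hanti.mono (Icc_subset_Icc_left ha.1)) ha0
      (fun x hx => hmax x ⟨ha.1.trans hx.1, hx.2⟩) hs

/-- The positive part of the ironed virtual surplus, which is constantly `l` on the pooling interval
`[0, a]` and equal to `g` beyond it. -/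
noncomputable def ironedSurplus (g : ℝ → ℝ) (a l s : ℝ) : ℝ :=
  max (if s ≤ a then l else g s) 0

lemma ironedSurplus_nonneg (g : ℝ → ℝ) (a l s : ℝ) : 0 ≤ ironedSurplus g a l s :=
  le_max_right _ _

lemma antitoneOn_ironedSurplus (hpool : IsPoolingInterval g a l) (hanti : AntitoneOn g (Icc a 1)) :
    AntitoneOn (ironedSurplus g a l) (Icc 0 1) := by
  intro x hx y hy hxy
  refine max_le_max_right 0 ?_
  split_ifs with hya hxa hxa
  · exact le_rfl
  · exact absurd (hxy.trans hya) hxa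
  · exact hpool.le_level y ⟨not_le.1 hya, hy.2⟩
  · exact hanti ⟨(not_le.1 hxa).le, hx.2⟩ ⟨(not_le.1 hya).le, hy.2⟩ hxy

lemma integral_le_integral_ironedSurplus (hpool : IsPoolingInterval g a l)
    (hg : IntervalIntegrable g volume 0 1) (hanti : AntitoneOn g (Icc a 1)) {x : ℝ}
    (hx : x ∈ Icc (0 : ℝ) 1) :
    ∫ t in (0 : ℝ)..x, g t ≤ ∫ t in (0 : ℝ)..x, ironedSurplus g a l t := by
  have hint := intervalIntegrable_of_antitoneOn zero_le_one (antitoneOn_ironedSurplus hpool hanti)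
  refine integral_le_integral_of_le_on_Ioc hg hint hpool.mem_Icc (fun y hy => ?_)
    (fun t ht => ?_) hx
  · refine (hpool.integral_le y hy).trans ?_
    have hy01 : y ∈ Icc (0 : ℝ) 1 := ⟨hy.1, hy.2.trans hpool.mem_Icc.2⟩
    simpa using const_mul_sub_le_integral hy.1
      (intervalIntegrable_of_mem_Icc hint (left_mem_Icc.2 zero_le_one) hy01)
      fun t ht => show l ≤ ironedSurplus g a l t by
        rw [ironedSurplus, if_pos (ht.2.le.trans hy.2)]; exact le_max_left l 0
  · rw [ironedSurplus, if_neg ht.1.not_ge]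
    exact le_max_left _ _

lemma integral_mul_le_integral_ironedSurplus_mul {P : ℝ → ℝ} (hpool : IsPoolingInterval g a l)
    (hg : IntervalIntegrable g volume 0 1) (hanti : AntitoneOn g (Icc a 1))
    (hq : IntervalIntegrable q volume 0 1) (hP : FeasibleUnder q P) :
    ∫ s in (0 : ℝ)..1, g s * P s ≤ ∫ s in (0 : ℝ)..1, ironedSurplus g a l s * q s := by
  obtain ⟨hP01, hPanti, hPmaj⟩ := hP
  have hiron := antitoneOn_ironedSurplus hpool hanti
  calc ∫ s in (0 : ℝ)..1, g s * P s
      ≤ ∫ s in (0 : ℝ)..1, ironedSurplus g a l s * P s :=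
        integral_mul_le_integral_mul_of_antitoneOn zero_le_one hg
          (intervalIntegrable_of_antitoneOn zero_le_one hiron) hPanti
          (hP01 1 (right_mem_Icc.2 zero_le_one)).1
          fun x hx => integral_le_integral_ironedSurplus hpool hg hanti hx
    _ = ∫ s in (0 : ℝ)..1, P s * ironedSurplus g a l s := by simp only [mul_comm]
    _ ≤ ∫ s in (0 : ℝ)..1, q s * ironedSurplus g a l s :=
        integral_mul_le_integral_mul_of_antitoneOn zero_le_one
          (intervalIntegrable_of_antitoneOn zero_le_one hPanti) hq hiron
          (ironedSurplus_nonneg g a l 1) hPmaj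
    _ = ∫ s in (0 : ℝ)..1, ironedSurplus g a l s * q s := by simp only [mul_comm]

lemma ironedSurplus_eq_zero (hpool : IsPoolingInterval g a l) (hl : l ≤ 0) {s : ℝ} (hs : s ≤ 1) :
    ironedSurplus g a l s = 0 := by
  refine max_eq_right ?_
  split_ifs with hsa
  · exact hl
  · exact (hpool.le_level s ⟨not_le.1 hsa, hs⟩).trans hl

lemma integral_ironedSurplus_mul_pooled (hpool : IsPoolingInterval g a l) (hl : 0 ≤ l) (S : ℝ) :
    ∫ s in (0 : ℝ)..a, ironedSurplus g a l s * q s =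
      ∫ s in (0 : ℝ)..a, g s * lowballAllocation q a S s := by
  have hleft : EqOn (fun s => ironedSurplus g a l s * q s) (fun s => l * q s) (Ioo 0 a) :=
    fun s hs => by simp only [ironedSurplus, if_pos hs.2.le, max_eq_left hl]
  have hright : EqOn (fun s => g s * lowballAllocation q a S s)
      (fun s => g s * ⨍ t in (0 : ℝ)..a, q t) (Ioo 0 a) :=
    fun s hs => by simp only [lowballAllocation_of_lt hs.2]
  rw [intervalIntegral.integral_congr_Ioo_of_le hpool.mem_Icc.1 hleft,
    intervalIntegral.integral_congr_Ioo_of_le hpool.mem_Icc.1 hright,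
    intervalIntegral.integral_const_mul, intervalIntegral.integral_mul_const, hpool.integral_eq,
    ← intervalAverage_mul_sub q 0 a]
  ring

lemma integral_ironedSurplus_mul_eq {S : ℝ} (hpool : IsPoolingInterval g a l) (hl : 0 ≤ l)
    (hg : IntervalIntegrable g volume 0 1) (hanti : AntitoneOn g (Icc a 1))
    (hq : AntitoneOn q (Icc 0 1)) (hq0 : ∀ s ∈ Icc (0 : ℝ) 1, 0 ≤ q s) (hS : S ∈ Icc a 1)
    (hnonneg : ∀ s ∈ Ioo a S, 0 ≤ g s) (hneg : ∀ s ∈ Ioc S 1, g s ≤ 0) :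
    ∫ s in (0 : ℝ)..1, ironedSurplus g a l s * q s =
      ∫ s in (0 : ℝ)..1, g s * lowballAllocation q a S s := by
  have ha := hpool.mem_Icc
  have hiron := intervalIntegrable_mul_of_antitoneOn zero_le_one
    (intervalIntegrable_of_antitoneOn zero_le_one (antitoneOn_ironedSurplus hpool hanti)) hq
  have hlow := intervalIntegrable_mul_of_antitoneOn zero_le_one hg
    (antitoneOn_lowballAllocation (S := S) hq hq0 ha.2)
  have ha1 : ∀ {f : ℝ → ℝ}, IntervalIntegrable f volume 0 1 → IntervalIntegrable f volume a 1 :=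
    fun hf => intervalIntegrable_of_mem_Icc hf ha (right_mem_Icc.2 zero_le_one)
  rw [← integral_add_integral_of_mem_Icc hiron ha, ← integral_add_integral_of_mem_Icc hlow ha,
    ← integral_add_integral_of_mem_Icc (ha1 hiron) hS,
    ← integral_add_integral_of_mem_Icc (ha1 hlow) hS, integral_ironedSurplus_mul_pooled hpool hl S]
  congr 2
  · refine intervalIntegral.integral_congr_Ioo_of_le hS.1 fun s hs => ?_
    simp only [ironedSurplus, if_neg hs.1.not_ge, max_eq_left (hnonneg s hs),
      lowballAllocation_of_mem_Icc (Ioo_subset_Icc_self hs)]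
  · refine intervalIntegral.integral_congr_Ioo_of_le hS.2 fun s hs => ?_
    simp only [ironedSurplus, if_neg (hS.1.trans_lt hs.1).not_ge,
      max_eq_right (hneg s (Ioo_subset_Ioc_self hs)), lowballAllocation_of_gt hS.1 hs.1, zero_mul,
      mul_zero]

lemma exists_integral_ironedSurplus_mul_eq (hpool : IsPoolingInterval g a l)
    (hg : IntervalIntegrable g volume 0 1) (hanti : AntitoneOn g (Icc a 1))
    (hq : AntitoneOn q (Icc 0 1)) (hq0 : ∀ s ∈ Icc (0 : ℝ) 1, 0 ≤ q s) :
    ∃ b S : ℝ, 0 ≤ b ∧ b ≤ S ∧ S ≤ 1 ∧ ∫ s in (0 : ℝ)..1, ironedSurplus g a l s * q s =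
      ∫ s in (0 : ℝ)..1, g s * lowballAllocation q b S s := by
  rcases le_total l 0 with hl | hl
  · refine ⟨0, 0, le_rfl, le_rfl, zero_le_one,
      intervalIntegral.integral_congr_Ioo_of_le zero_le_one fun s hs => ?_⟩
    simp only [ironedSurplus_eq_zero hpool hl hs.2.le, lowballAllocation_of_gt le_rfl hs.1,
      zero_mul, mul_zero]
  · obtain ⟨S, hS, hsub, hsup⟩ := exists_Ioo_subset_superlevel_subset_Ioc hpool.mem_Icc.2
      (hanti.mono Ioc_subset_Icc_self) 0
    refine ⟨a, S, hpool.mem_Icc.1, hS.1, hS.2, integral_ironedSurplus_mul_eq hpool hl hg hanti hq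
      hq0 hS (fun s hs => (hsub hs).2) fun s hs => ?_⟩
    by_contra! hpos
    exact hs.1.not_ge (hsup ⟨⟨hS.1.trans_lt hs.1, hs.2⟩, hpos.le⟩).2

end Ironing

theorem stmt_9_general {q g : ℝ → ℝ} (hq : AntitoneOn q (Icc 0 1))
    (hq01 : MapsTo q (Icc 0 1) (Icc 0 1)) {m : ℝ} (hm : m ∈ Icc (0 : ℝ) 1)
    (hmono : MonotoneOn g (Icc 0 m)) (hanti : AntitoneOn g (Icc m 1)) :
    ∃ a S : ℝ, 0 ≤ a ∧ a ≤ S ∧ S ≤ 1 ∧ FeasibleUnder q (lowballAllocation q a S) ∧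
      ∀ P : ℝ → ℝ, FeasibleUnder q P →
        ∫ s in (0 : ℝ)..1, g s * P s ≤ ∫ s in (0 : ℝ)..1, g s * lowballAllocation q a S s := by
  have hg := intervalIntegrable_of_monotoneOn_of_antitoneOn hm hmono hanti
  have hqint := intervalIntegrable_of_antitoneOn zero_le_one hq
  obtain ⟨c, l, hmc, hpool⟩ := exists_isPoolingInterval hm hmono hanti
  have hanti_c : AntitoneOn g (Icc c 1) := hanti.mono (Icc_subset_Icc_left hmc)
  obtain ⟨a, S, ha, haS, hS, heq⟩ := exists_integral_ironedSurplus_mul_eq hpool hg hanti_c hq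
    fun s hs => (hq01 hs).1
  exact ⟨a, S, ha, haS, hS, feasibleUnder_lowballAllocation hq hq01 ⟨ha, haS.trans hS⟩,
    fun P hP => heq ▸ integral_mul_le_integral_ironedSurplus_mul hpool hg hanti_c hqint hP⟩

lemma antitoneOn_one_sub_pow (k : ℕ) : AntitoneOn (fun t : ℝ => (1 - t) ^ k) (Iic 1) :=
  fun _ _ _ hy hxy => pow_le_pow_left₀ (sub_nonneg.2 hy) (sub_le_sub_left hxy 1) k

lemma mapsTo_one_sub_pow (k : ℕ) : MapsTo (fun t : ℝ => (1 - t) ^ k) (Icc 0 1) (Icc 0 1) :=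
  fun _ ht => ⟨pow_nonneg (sub_nonneg.2 ht.2) k,
    pow_le_one₀ (sub_nonneg.2 ht.2) (sub_le_self 1 ht.1)⟩

/-- If the quantile virtual surplus `g̃` is single-peaked, then some
lowball-lottery-auction allocation — pooling on `[0,a)`, following `(1−s)^{n−1}` on
`[a,S]`, and excluding `(S,1]` — is feasible and maximizes `∫₀¹ g̃ P`. -/
theorem stmt_9 (n : ℕ) (hn : 2 ≤ n)
    (gt : ℝ → ℝ) (hgt_meas : Measurable gt)
    (hgt_bdd : ∃ C, ∀ s ∈ Icc (0:ℝ) 1, |gt s| ≤ C)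
    (m : ℝ) (hm : m ∈ Icc (0:ℝ) 1)
    (hgt_mono : MonotoneOn gt (Icc (0:ℝ) m))
    (hgt_anti : AntitoneOn gt (Icc m 1)) :
    ∃ a S : ℝ, ∃ Phat : ℝ → ℝ, 0 ≤ a ∧ a ≤ S ∧ S ≤ 1 ∧
      (∀ s ∈ Ico (0:ℝ) a, Phat s = (1 / a) * ∫ t in (0:ℝ)..a, (1 - t) ^ (n - 1)) ∧
      (∀ s ∈ Icc a S, Phat s = (1 - s) ^ (n - 1)) ∧
      (∀ s ∈ Ioc S 1, Phat s = 0) ∧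
      Feasible n Phat ∧
      ∀ P : ℝ → ℝ, Feasible n P →
        (∫ s in (0:ℝ)..1, gt s * P s) ≤ ∫ s in (0:ℝ)..1, gt s * Phat s := by
  obtain ⟨a, S, ha, haS, hS, hfeas, hmax⟩ := stmt_9_general
    ((antitoneOn_one_sub_pow (n - 1)).mono Icc_subset_Iic_self) (mapsTo_one_sub_pow (n - 1))
    hm hgt_mono hgt_anti
  refine ⟨a, S, lowballAllocation (fun t => (1 - t) ^ (n - 1)) a S, ha, haS, hS, fun s hs => ?_,
    fun s hs => lowballAllocation_of_mem_Icc hs, fun s hs => lowballAllocation_of_gt haS hs.1,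
    hfeas, hmax⟩
  rw [lowballAllocation_of_lt hs.2, interval_average_eq_div, sub_zero, div_eq_mul_one_div, mul_comm]
end

section
/- Let n ≥ 2, let F : [0,1] → [0,1] be twice continuously differentiable with F(0) = 0, F(1) = 1, f := F' > 0 on (0,1), and with log F and log(1−F) concave on (0,1); let v : [0,1] → ℝ be continuous with x ↦ v(x) − x strictly decreasing. Fix γ ∈ [0,1] and define g̃(s) = v(F⁻¹(s)) − F⁻¹(s) − F(F⁻¹(s))/f(F⁻¹(s)) and h̃_γ(s) = v(F⁻¹(s)) − F⁻¹(s) − γ·F(F⁻¹(s))/f(F⁻¹(s)) for s ∈ (0,1). Then there exists S₀ ∈ [0,1] such that P̂(s) = (1−s)^{n−1} for s ≤ S₀ and P̂(s) = 0 for s > S₀ is feasible, satisfies ∫_0^1 g̃(s) P̂(s) ds ≥ 0, and maximizes ∫_0^1 h̃_γ(s) P(s) ds over all feasible P with ∫_0^1 g̃(s) P(s) ds ≥ 0. -/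
open MeasureTheory Set

/-!
Border's constraint says that `Q s = (1 - s) ^ (n - 1)` weakly majorizes `P`. The superlevel sets of
a nonincreasing weight `φ ≥ 0` are initial intervals, so the layer cake formula turns majorization
into `∫ φ P ≤ ∫ φ Q`; hence a nonincreasing weight that changes sign at `S` is maximized by `Q` cut
off at `S`.

Log-concavity of `F` makes `F / F'` nondecreasing, so the virtual surpluses `gt` and `ht` are
nonincreasing, and the substitution `s = F x` makes them integrable, because `(F / F') * F' = F`.
Let `S₀` be the last point up to the sign change of `ht` at which `Q` cut off there satisfies the
buyer's constraint. If `S₀` is the sign change itself, the constraint can be ignored. Otherwise it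
binds at `S₀` and `gt < 0` beyond; then either some multiplier `l ≥ 0` makes `ht + l * gt` change
sign at `S₀`, or the constraint forces `P` to vanish almost everywhere beyond `S₀`.
-/

theorem exists_Ioo_subset_subset_Ioc {A : Set ℝ} {a b : ℝ} (hne : A.Nonempty) (hA : A ⊆ Ioo a b)
    (hlower : ∀ s ∈ A, Ioo a s ⊆ A) : ∃ x ∈ Ioc a b, Ioo a x ⊆ A ∧ A ⊆ Ioc a x := by
  have hbdd : BddAbove A := ⟨b, fun s hs => (hA hs).2.le⟩
  obtain ⟨s₀, hs₀⟩ := hne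
  refine ⟨sSup A, ⟨(hA hs₀).1.trans_le (le_csSup hbdd hs₀),
    csSup_le ⟨s₀, hs₀⟩ fun s hs => (hA hs).2.le⟩, fun r hr => ?_,
    fun s hs => ⟨(hA hs).1, le_csSup hbdd hs⟩⟩
  obtain ⟨s, hs, hrs⟩ := exists_lt_of_lt_csSup ⟨s₀, hs₀⟩ hr.2
  exact hlower s hs ⟨hr.1, hrs⟩

theorem lintegral_ofReal_le_of_measure_Ioo_le {μ ν : Measure ℝ} [NullSingletonClass μ] {a b : ℝ}
    {φ : ℝ → ℝ} (hφ : AntitoneOn φ (Ioo a b)) (hφ0 : ∀ s ∈ Ioo a b, 0 ≤ φ s)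
    (hμν : ∀ x ∈ Ioc a b, μ (Ioo a x) ≤ ν (Ioo a x)) :
    ∫⁻ s in Ioo a b, ENNReal.ofReal (φ s) ∂μ ≤ ∫⁻ s in Ioo a b, ENNReal.ofReal (φ s) ∂ν := by
  have layer_cake (ρ : Measure ℝ) := lintegral_eq_lintegral_meas_lt (ρ.restrict (Ioo a b))
    (ae_restrict_of_forall_mem measurableSet_Ioo hφ0)
    (aemeasurable_restrict_of_antitoneOn measurableSet_Ioo hφ)
  rw [layer_cake μ, layer_cake ν]
  refine lintegral_mono fun t => ?_
  simp only [Measure.restrict_apply' measurableSet_Ioo]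
  set A := {s | t < φ s} ∩ Ioo a b
  rcases A.eq_empty_or_nonempty with hA | hA
  · simp only [hA, measure_empty, le_refl]
  have hlower : ∀ s ∈ A, Ioo a s ⊆ A := fun s hs r hr =>
    have hr' : r ∈ Ioo a b := ⟨hr.1, hr.2.trans hs.2.2⟩
    ⟨hs.1.trans_le (hφ hr' hs.2 hr.2.le), hr'⟩
  obtain ⟨x, hx, hxA, hAx⟩ := exists_Ioo_subset_subset_Ioc hA inter_subset_right hlower
  calc μ A ≤ μ (Ioc a x) := measure_mono hAx
    _ = μ (Ioo a x) := measure_congr Ioo_ae_eq_Ioc.symm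
    _ ≤ ν (Ioo a x) := hμν x hx
    _ ≤ ν A := measure_mono hxA

/-- Interim allocations on `[a, b]`: nonnegative and nonincreasing functions. The upper
bound `1` of `Feasible` is left out; `P a` already bounds `P`. -/
structure IsAllocationOn (P : ℝ → ℝ) (a b : ℝ) : Prop where
  nonneg : ∀ s ∈ Icc a b, 0 ≤ P s
  antitoneOn : AntitoneOn P (Icc a b)

/-- Weak majorization of `P` by `Q` on `[a, b]` in the integral form of Border's condition; it
is meant for `P` and `Q` that are already nonincreasing, so no rearrangement is taken. -/
def WeaklyMajorizedOn (P Q : ℝ → ℝ) (a b : ℝ) : Prop :=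
  ∀ x ∈ Icc a b, (∫ t in a..x, P t) ≤ ∫ t in a..x, Q t

theorem intervalIntegral_nonneg_of_forall_Ioo {f : ℝ → ℝ} {a b : ℝ} (hab : a ≤ b)
    (hf : ∀ s ∈ Ioo a b, 0 ≤ f s) : 0 ≤ ∫ s in a..b, f s := by
  rw [intervalIntegral.integral_of_le hab, integral_Ioc_eq_integral_Ioo]
  exact setIntegral_nonneg measurableSet_Ioo hf

section Allocation

variable {a b c d : ℝ} {φ P Q : ℝ → ℝ}

theorem WeaklyMajorizedOn.mono (hPQ : WeaklyMajorizedOn P Q a b) (hcb : c ≤ b) :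
    WeaklyMajorizedOn P Q a c :=
  fun x hx => hPQ x (Icc_subset_Icc_right hcb hx)

namespace IsAllocationOn

theorem mono (hP : IsAllocationOn P a b) (hcd : Icc c d ⊆ Icc a b) : IsAllocationOn P c d :=
  ⟨fun s hs => hP.nonneg s (hcd hs), hP.antitoneOn.mono hcd⟩

theorem nonneg_of_mem_Ioo (hP : IsAllocationOn P a b) {s : ℝ} (hs : s ∈ Ioo a b) : 0 ≤ P s :=
  hP.nonneg s (Ioo_subset_Icc_self hs)

theorem intervalIntegrable_mul (hP : IsAllocationOn P a b) (hab : a ≤ b)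
    (hφ : IntervalIntegrable φ volume a b) :
    IntervalIntegrable (fun s => φ s * P s) volume a b := by
  rw [intervalIntegrable_iff_integrableOn_Icc_of_le hab] at hφ ⊢
  exact hφ.mul_of_top_left (hP.antitoneOn.memLp_isCompact isCompact_Icc)

theorem withDensity_Ioo (hP : IsAllocationOn P a b) (hab : a ≤ b) :
    volume.withDensity (fun s => ENNReal.ofReal (P s)) (Ioo a b) =
      ENNReal.ofReal (∫ s in a..b, P s) := by
  have hPi : IntegrableOn P (Ioo a b) :=
    (hP.antitoneOn.integrableOn_isCompact isCompact_Icc).mono_set Ioo_subset_Icc_self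
  rw [withDensity_apply _ measurableSet_Ioo, intervalIntegral.integral_of_le hab,
    integral_Ioc_eq_integral_Ioo, ofReal_integral_eq_lintegral_ofReal hPi
      (ae_restrict_of_forall_mem measurableSet_Ioo fun s hs => hP.nonneg_of_mem_Ioo hs)]

theorem lintegral_withDensity (hP : IsAllocationOn P a b) (hab : a ≤ b)
    (hφ : IntervalIntegrable φ volume a b) (hφ0 : ∀ s ∈ Ioo a b, 0 ≤ φ s) :
    ∫⁻ s in Ioo a b, ENNReal.ofReal (φ s) ∂volume.withDensity (fun s => ENNReal.ofReal (P s)) =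
      ENNReal.ofReal (∫ s in a..b, φ s * P s) := by
  have hφP := (intervalIntegrable_iff_integrableOn_Ioo_of_le hab).1
    (hP.intervalIntegrable_mul hab hφ)
  rw [intervalIntegrable_iff_integrableOn_Ioo_of_le hab] at hφ
  have hPm : AEMeasurable P (volume.restrict (Ioo a b)) :=
    aemeasurable_restrict_of_antitoneOn measurableSet_Ioo (hP.antitoneOn.mono Ioo_subset_Icc_self)
  rw [restrict_withDensity measurableSet_Ioo,
    lintegral_withDensity_eq_lintegral_mul₀ hPm.ennreal_ofReal hφ.aemeasurable.ennreal_ofReal,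
    intervalIntegral.integral_of_le hab, integral_Ioc_eq_integral_Ioo,
    ofReal_integral_eq_lintegral_ofReal hφP (ae_restrict_of_forall_mem measurableSet_Ioo
      fun s hs => mul_nonneg (hφ0 s hs) (hP.nonneg_of_mem_Ioo hs))]
  refine setLIntegral_congr_fun measurableSet_Ioo fun s hs => ?_
  simp only [Pi.mul_apply, ENNReal.ofReal_mul (hφ0 s hs), mul_comm]

theorem integral_mul_nonneg (hP : IsAllocationOn P a b) (hab : a ≤ b)
    (hφ : ∀ s ∈ Ioo a b, 0 ≤ φ s) : 0 ≤ ∫ s in a..b, φ s * P s :=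
  intervalIntegral_nonneg_of_forall_Ioo hab fun s hs =>
    mul_nonneg (hφ s hs) (hP.nonneg_of_mem_Ioo hs)

theorem integral_mul_nonpos (hP : IsAllocationOn P a b) (hab : a ≤ b)
    (hφ : ∀ s ∈ Ioo a b, φ s ≤ 0) : ∫ s in a..b, φ s * P s ≤ 0 := by
  have hneg := hP.integral_mul_nonneg (φ := fun s => -φ s) hab fun s hs => neg_nonneg.2 (hφ s hs)
  simpa only [neg_mul, intervalIntegral.integral_neg, neg_nonneg] using hneg

theorem integral_mul_le_of_weaklyMajorizedOn (hP : IsAllocationOn P a b)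
    (hQ : IsAllocationOn Q a b) (hPQ : WeaklyMajorizedOn P Q a b) (hab : a ≤ b)
    (hφ : AntitoneOn φ (Ioo a b)) (hφi : IntervalIntegrable φ volume a b)
    (hφ0 : ∀ s ∈ Ioo a b, 0 ≤ φ s) :
    ∫ s in a..b, φ s * P s ≤ ∫ s in a..b, φ s * Q s := by
  rw [← ENNReal.ofReal_le_ofReal_iff (hQ.integral_mul_nonneg hab hφ0),
    ← hP.lintegral_withDensity hab hφi hφ0, ← hQ.lintegral_withDensity hab hφi hφ0]
  refine lintegral_ofReal_le_of_measure_Ioo_le hφ hφ0 fun x hx => ?_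
  have hsub : Icc a x ⊆ Icc a b := Icc_subset_Icc_right hx.2
  rw [(hP.mono hsub).withDensity_Ioo hx.1.le, (hQ.mono hsub).withDensity_Ioo hx.1.le]
  exact ENNReal.ofReal_le_ofReal (hPQ x (Ioc_subset_Icc_self hx))

theorem integral_mul_eq_zero_of_neg {ψ : ℝ → ℝ} (hP : IsAllocationOn P a b) (hab : a ≤ b)
    (hφi : IntervalIntegrable φ volume a b) (hφ : ∀ s ∈ Ioo a b, φ s < 0)
    (hφP : 0 ≤ ∫ s in a..b, φ s * P s) : ∫ s in a..b, ψ s * P s = 0 := by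
  have hle := hP.integral_mul_nonpos hab fun s hs => (hφ s hs).le
  have hzero : ∫ s in Ioo a b, -φ s * P s = 0 := by
    rw [← integral_Ioc_eq_integral_Ioo, ← intervalIntegral.integral_of_le hab]
    simp only [neg_mul, intervalIntegral.integral_neg, hle.antisymm hφP, neg_zero]
  have hi := (intervalIntegrable_iff_integrableOn_Ioo_of_le hab).1
    (hP.intervalIntegrable_mul hab hφi.neg)
  have hae := (setIntegral_eq_zero_iff_of_nonneg_ae
    (ae_restrict_of_forall_mem measurableSet_Ioo fun s hs =>
      mul_nonneg (neg_nonneg.2 (hφ s hs).le) (hP.nonneg_of_mem_Ioo hs)) hi).1 hzero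
  rw [intervalIntegral.integral_of_le hab, integral_Ioc_eq_integral_Ioo]
  refine integral_eq_zero_of_ae ?_
  filter_upwards [hae, ae_restrict_mem measurableSet_Ioo] with s hs hmem
  have hPs : P s = 0 := (mul_eq_zero.1 hs).resolve_left (neg_ne_zero.2 (hφ s hmem).ne)
  simp only [hPs, mul_zero, Pi.zero_apply]

end IsAllocationOn

end Allocation

section Cutoff

variable {a b l S : ℝ} {φ g h P Q : ℝ → ℝ}

theorem exists_sign_change_of_antitoneOn (hab : a ≤ b) (hφ : AntitoneOn φ (Ioo a b)) :
    ∃ S ∈ Icc a b, (∀ s ∈ Ioo a S, 0 ≤ φ s) ∧ ∀ s ∈ Ioo S b, φ s ≤ 0 := by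
  set A : Set ℝ := insert a {s ∈ Ioo a b | 0 ≤ φ s}
  have ha : a ∈ A := mem_insert _ _
  have hA : A ⊆ Icc a b :=
    insert_subset (left_mem_Icc.2 hab) fun s hs => Ioo_subset_Icc_self hs.1
  have hbdd : BddAbove A := bddAbove_Icc.mono hA
  have hS : sSup A ∈ Icc a b := ⟨le_csSup hbdd ha, csSup_le ⟨a, ha⟩ fun s hs => (hA hs).2⟩
  refine ⟨sSup A, hS, fun s hs => ?_, fun s hs => ?_⟩
  · obtain ⟨r, rfl | hr, hsr⟩ := exists_lt_of_lt_csSup ⟨a, ha⟩ hs.2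
    · exact absurd hsr hs.1.not_gt
    · exact hr.2.trans (hφ ⟨hs.1, hs.2.trans_le hS.2⟩ hr.1 hsr.le)
  · by_contra! hφs
    exact hs.1.not_ge (le_csSup hbdd (Or.inr ⟨⟨hS.1.trans_lt hs.1, hs.2⟩, hφs.le⟩))

theorem exists_last_nonneg {G : ℝ → ℝ} (hab : a ≤ b) (hG : ContinuousOn G (Icc a b))
    (ha : 0 ≤ G a) :
    ∃ S ∈ Icc a b, 0 ≤ G S ∧ (∀ x ∈ Ioc S b, G x < 0) ∧ (S < b → G S = 0) := by
  have hclosed := hG.preimage_isClosed_of_isClosed isClosed_Icc (isClosed_Ici (a := 0))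
  obtain ⟨S, ⟨hS, hGS⟩, hlast⟩ := (isCompact_Icc.of_isClosed_subset hclosed
    inter_subset_left).exists_isGreatest ⟨a, left_mem_Icc.2 hab, ha⟩
  have hneg : ∀ x ∈ Ioc S b, G x < 0 := fun x hx => by
    by_contra! hGx
    exact hx.1.not_ge (hlast ⟨⟨hS.1.trans hx.1.le, hx.2⟩, hGx⟩)
  refine ⟨S, hS, hGS, hneg, fun hSb => le_antisymm ?_ hGS⟩
  have hlim : ContinuousWithinAt G (Ioo S b) S :=
    (hG S hS).mono fun x hx => ⟨hS.1.trans hx.1.le, hx.2.le⟩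
  have := left_nhdsWithin_Ioo_neBot hSb
  refine le_of_tendsto hlim ?_
  filter_upwards [self_mem_nhdsWithin] with x hx
  exact (hneg x (Ioo_subset_Ioc_self hx)).le

theorem forall_neg_of_integral_mul_neg {c : ℝ} (hQ : IsAllocationOn Q a b)
    (hg : AntitoneOn g (Ioo a b)) (haS : a ≤ S) (hSc : S < c) (hcb : c ≤ b)
    (hneg : ∀ x ∈ Ioc S c, ∫ s in a..x, g s * Q s < 0) : ∀ s ∈ Ioo S b, g s < 0 := by
  intro s hs
  by_contra! hgs
  have hx : min s c ∈ Ioc S c := ⟨lt_min hs.1 hSc, min_le_right _ _⟩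
  refine (hneg _ hx).not_ge ((hQ.mono (Icc_subset_Icc_right (hx.2.trans hcb))).integral_mul_nonneg
    (haS.trans hx.1.le) fun r hr => hgs.trans ?_)
  have hrs : r < s := hr.2.trans_le (min_le_left _ _)
  exact hg ⟨hr.1, hrs.trans hs.2⟩ ⟨haS.trans_lt hs.1, hs.2⟩ hrs.le

namespace IsAllocationOn

theorem integral_mul_add_adjacent (hP : IsAllocationOn P a b)
    (hφ : IntervalIntegrable φ volume a b) (hS : S ∈ Icc a b) :
    (∫ s in a..S, φ s * P s) + ∫ s in S..b, φ s * P s = ∫ s in a..b, φ s * P s := by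
  have hab := hS.1.trans hS.2
  have hφP := hP.intervalIntegrable_mul hab hφ
  have hS' : S ∈ uIcc a b := by rwa [uIcc_of_le hab]
  exact intervalIntegral.integral_add_adjacent_intervals
    (hφP.mono_set (uIcc_subset_uIcc_left hS')) (hφP.mono_set (uIcc_subset_uIcc_right hS'))

theorem integral_add_const_mul_mul (hP : IsAllocationOn P a b) (hab : a ≤ b)
    (hh : IntervalIntegrable h volume a b) (hg : IntervalIntegrable g volume a b) (l : ℝ) :
    ∫ s in a..b, (h s + l * g s) * P s =
      (∫ s in a..b, h s * P s) + l * ∫ s in a..b, g s * P s := by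
  simp only [add_mul, mul_assoc]
  rw [intervalIntegral.integral_add (hP.intervalIntegrable_mul hab hh)
    ((hP.intervalIntegrable_mul hab hg).const_mul l), intervalIntegral.integral_const_mul]

theorem integral_mul_le_of_sign_change (hP : IsAllocationOn P a b) (hQ : IsAllocationOn Q a b)
    (hPQ : WeaklyMajorizedOn P Q a b) (hS : S ∈ Icc a b) (hφ : AntitoneOn φ (Ioo a b))
    (hφi : IntervalIntegrable φ volume a b) (hpos : ∀ s ∈ Ioo a S, 0 ≤ φ s)
    (hneg : ∀ s ∈ Ioo S b, φ s ≤ 0) :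
    ∫ s in a..b, φ s * P s ≤ ∫ s in a..S, φ s * Q s := by
  have hl : Icc a S ⊆ Icc a b := Icc_subset_Icc_right hS.2
  have hbefore := (hP.mono hl).integral_mul_le_of_weaklyMajorizedOn (hQ.mono hl)
    (hPQ.mono hS.2) hS.1 (hφ.mono (Ioo_subset_Ioo_right hS.2))
    (hφi.mono_set (uIcc_subset_uIcc_left (Icc_subset_uIcc hS))) hpos
  have hafter := (hP.mono (Icc_subset_Icc_left hS.1)).integral_mul_nonpos hS.2 hneg
  linarith [hP.integral_mul_add_adjacent hφi hS]

theorem integral_mul_le_of_multiplier (hP : IsAllocationOn P a b) (hQ : IsAllocationOn Q a b)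
    (hPQ : WeaklyMajorizedOn P Q a b) (hS : S ∈ Icc a b) (hl : 0 ≤ l)
    (hanti : AntitoneOn (fun s => h s + l * g s) (Ioo a b))
    (hgi : IntervalIntegrable g volume a b) (hhi : IntervalIntegrable h volume a b)
    (hpos : ∀ s ∈ Ioo a S, 0 ≤ h s + l * g s) (hneg : ∀ s ∈ Ioo S b, h s + l * g s ≤ 0)
    (hbind : ∫ s in a..S, g s * Q s = 0) (hgP : 0 ≤ ∫ s in a..b, g s * P s) :
    ∫ s in a..b, h s * P s ≤ ∫ s in a..S, h s * Q s := by
  have hsub := uIcc_subset_uIcc_left (Icc_subset_uIcc hS)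
  calc ∫ s in a..b, h s * P s
      ≤ (∫ s in a..b, h s * P s) + l * ∫ s in a..b, g s * P s :=
        le_add_of_nonneg_right (mul_nonneg hl hgP)
    _ = ∫ s in a..b, (h s + l * g s) * P s :=
        (hP.integral_add_const_mul_mul (hS.1.trans hS.2) hhi hgi l).symm
    _ ≤ ∫ s in a..S, (h s + l * g s) * Q s :=
        hP.integral_mul_le_of_sign_change hQ hPQ hS hanti (hhi.add (hgi.const_mul l)) hpos hneg
    _ = (∫ s in a..S, h s * Q s) + l * ∫ s in a..S, g s * Q s :=
        (hQ.mono (Icc_subset_Icc_right hS.2)).integral_add_const_mul_mul hS.1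
          (hhi.mono_set hsub) (hgi.mono_set hsub) l
    _ = ∫ s in a..S, h s * Q s := by rw [hbind, mul_zero, add_zero]

theorem integral_mul_le_of_nonneg_of_neg (hP : IsAllocationOn P a b) (hQ : IsAllocationOn Q a b)
    (hPQ : WeaklyMajorizedOn P Q a b) (hS : S ∈ Icc a b)
    (hg : AntitoneOn g (Ioo a b)) (hh : AntitoneOn h (Ioo a b))
    (hgi : IntervalIntegrable g volume a b) (hhi : IntervalIntegrable h volume a b)
    (hh0 : ∀ s ∈ Ioo a S, 0 ≤ h s) (hg0 : ∀ s ∈ Ioo a S, 0 ≤ g s)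
    (hgneg : ∀ s ∈ Ioo S b, g s < 0)
    (hbind : ∫ s in a..S, g s * Q s = 0) (hgP : 0 ≤ ∫ s in a..b, g s * P s) :
    ∫ s in a..b, h s * P s ≤ ∫ s in a..S, h s * Q s := by
  have hsub := uIcc_subset_uIcc_left (Icc_subset_uIcc hS)
  have hIcc : Icc a S ⊆ Icc a b := Icc_subset_Icc_right hS.2
  have hIoo : Ioo a S ⊆ Ioo a b := Ioo_subset_Ioo_right hS.2
  have hmaj {φ : ℝ → ℝ} (hφ : AntitoneOn φ (Ioo a b)) (hφi : IntervalIntegrable φ volume a b)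
      (hφ0 : ∀ s ∈ Ioo a S, 0 ≤ φ s) : ∫ s in a..S, φ s * P s ≤ ∫ s in a..S, φ s * Q s :=
    (hP.mono hIcc).integral_mul_le_of_weaklyMajorizedOn (hQ.mono hIcc) (hPQ.mono hS.2) hS.1
      (hφ.mono hIoo) (hφi.mono_set hsub) hφ0
  have hgafter : 0 ≤ ∫ s in S..b, g s * P s := by
    linarith [hmaj hg hgi hg0, hP.integral_mul_add_adjacent hgi hS]
  have hafter : ∫ s in S..b, h s * P s = 0 :=
    (hP.mono (Icc_subset_Icc_left hS.1)).integral_mul_eq_zero_of_neg hS.2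
      (hgi.mono_set (uIcc_subset_uIcc_right (Icc_subset_uIcc hS))) hgneg hgafter
  linarith [hmaj hh hhi hh0, hP.integral_mul_add_adjacent hhi hS]

theorem integral_mul_le_of_binding (hP : IsAllocationOn P a b) (hQ : IsAllocationOn Q a b)
    (hPQ : WeaklyMajorizedOn P Q a b) (hS : S ∈ Ico a b)
    (hg : AntitoneOn g (Ioo a b)) (hh : AntitoneOn h (Ioo a b))
    (hgi : IntervalIntegrable g volume a b) (hhi : IntervalIntegrable h volume a b)
    (hh0 : ∀ s ∈ Ioc a S, 0 ≤ h s) (hgneg : ∀ s ∈ Ioo S b, g s < 0)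
    (hbind : ∫ s in a..S, g s * Q s = 0) (hgP : 0 ≤ ∫ s in a..b, g s * P s) :
    ∫ s in a..b, h s * P s ≤ ∫ s in a..S, h s * Q s := by
  -- If `g S = 0` or `S = a`, there may be no multiplier: `h / -g` can be unbounded just after `S`.
  by_cases hgS : a < S ∧ g S < 0
  · obtain ⟨haS, hgS⟩ := hgS
    have hSab : S ∈ Ioo a b := ⟨haS, hS.2⟩
    set l := h S / -g S
    have hl : 0 ≤ l := div_nonneg (hh0 S (right_mem_Ioc.2 haS)) (neg_pos.2 hgS).le
    have hzero : h S + l * g S = 0 := by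
      have hlS : l * -g S = h S := div_mul_cancel₀ _ (neg_ne_zero.2 hgS.ne)
      linarith
    have hanti : AntitoneOn (fun s => h s + l * g s) (Ioo a b) :=
      hh.add fun s hs r hr hsr => mul_le_mul_of_nonneg_left (hg hs hr hsr) hl
    exact hP.integral_mul_le_of_multiplier hQ hPQ (Ico_subset_Icc_self hS) hl hanti hgi hhi
      (fun s hs => hzero.ge.trans (hanti ⟨hs.1, hs.2.trans hS.2⟩ hSab hs.2.le))
      (fun s hs => (hanti hSab ⟨haS.trans hs.1, hs.2⟩ hs.1.le).trans hzero.le) hbind hgP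
  · have hg0 : ∀ s ∈ Ioo a S, 0 ≤ g s := fun s hs =>
      have haS : a < S := hs.1.trans hs.2
      (not_lt.1 fun hlt => hgS ⟨haS, hlt⟩).trans
        (hg ⟨hs.1, hs.2.trans hS.2⟩ ⟨haS, hS.2⟩ hs.2.le)
    exact hP.integral_mul_le_of_nonneg_of_neg hQ hPQ (Ico_subset_Icc_self hS) hg hh hgi hhi
      (fun s hs => hh0 s (Ioo_subset_Ioc_self hs)) hg0 hgneg hbind hgP

theorem exists_optimal_cutoff (hQ : IsAllocationOn Q a b) (hab : a ≤ b)
    (hg : AntitoneOn g (Ioo a b)) (hh : AntitoneOn h (Ioo a b))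
    (hgi : IntervalIntegrable g volume a b) (hhi : IntervalIntegrable h volume a b) :
    ∃ S ∈ Icc a b, 0 ≤ ∫ s in a..S, g s * Q s ∧
      ∀ P, IsAllocationOn P a b → WeaklyMajorizedOn P Q a b → 0 ≤ ∫ s in a..b, g s * P s →
        ∫ s in a..b, h s * P s ≤ ∫ s in a..S, h s * Q s := by
  obtain ⟨c, hc, hpos, hneg⟩ := exists_sign_change_of_antitoneOn hab hh
  have hcont : ContinuousOn (fun x => ∫ s in a..x, g s * Q s) (Icc a c) := by
    have hprim := intervalIntegral.continuousOn_primitive_interval'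
      (hQ.intervalIntegrable_mul hab hgi) left_mem_uIcc
    exact hprim.mono ((Icc_subset_Icc_right hc.2).trans Icc_subset_uIcc)
  obtain ⟨S, hS, hGS, hGneg, hbind⟩ := exists_last_nonneg hc.1 hcont
    intervalIntegral.integral_same.ge
  refine ⟨S, ⟨hS.1, hS.2.trans hc.2⟩, hGS, fun P hP hPQ hgP => ?_⟩
  rcases hS.2.eq_or_lt with rfl | hSc
  · exact hP.integral_mul_le_of_sign_change hQ hPQ hc hh hhi hpos hneg
  · exact hP.integral_mul_le_of_binding hQ hPQ ⟨hS.1, hSc.trans_le hc.2⟩ hg hh hgi hhi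
      (fun s hs => hpos s ⟨hs.1, hs.2.trans_lt hSc⟩)
      (forall_neg_of_integral_mul_neg hQ hg hS.1 hSc hc.2 hGneg) (hbind hSc) hgP

end IsAllocationOn

end Cutoff

section Feasible

variable {n : ℕ} {P : ℝ → ℝ}

theorem Feasible.isAllocationOn (hP : Feasible n P) : IsAllocationOn P 0 1 :=
  ⟨fun s hs => (hP.1 s hs).1, hP.2.1⟩

theorem Feasible.weaklyMajorizedOn (hP : Feasible n P) :
    WeaklyMajorizedOn P (fun s => (1 - s) ^ (n - 1)) 0 1 :=
  hP.2.2

theorem isAllocationOn_one_sub_pow (m : ℕ) : IsAllocationOn (fun s => (1 - s) ^ m) 0 1 where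
  nonneg _ hs := pow_nonneg (sub_nonneg.2 hs.2) m
  antitoneOn _ _ _ hr hsr := pow_le_pow_left₀ (sub_nonneg.2 hr.2) (sub_le_sub_left hsr 1) m

theorem IsAllocationOn.indicator_Iic {a b : ℝ} (hP : IsAllocationOn P a b) (S : ℝ) :
    IsAllocationOn ((Iic S).indicator P) a b where
  nonneg s hs := indicator_apply_nonneg fun _ => hP.nonneg s hs
  antitoneOn s hs r hr hsr := by
    by_cases hrS : r ≤ S
    · rw [indicator_of_mem (mem_Iic.2 hrS), indicator_of_mem (mem_Iic.2 (hsr.trans hrS))]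
      exact hP.antitoneOn hs hr hsr
    · rw [indicator_of_notMem (notMem_Iic.2 (not_le.1 hrS))]
      exact indicator_apply_nonneg fun _ => hP.nonneg s hs

theorem feasible_indicator_Iic (n : ℕ) (S : ℝ) :
    Feasible n ((Iic S).indicator fun s => (1 - s) ^ (n - 1)) := by
  have hQ := isAllocationOn_one_sub_pow (n - 1)
  have hI := hQ.indicator_Iic S
  have hle : ∀ s ∈ Icc (0 : ℝ) 1,
      (Iic S).indicator (fun s => (1 - s) ^ (n - 1)) s ≤ (1 - s) ^ (n - 1) := fun s hs =>
    indicator_apply_le' (fun _ => le_rfl) fun _ => hQ.nonneg s hs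
  refine ⟨fun s hs => ⟨hI.nonneg s hs, (hle s hs).trans
    (pow_le_one₀ (sub_nonneg.2 hs.2) (sub_le_self 1 hs.1))⟩, hI.antitoneOn, fun x hx => ?_⟩
  have hsub : Icc 0 x ⊆ Icc (0 : ℝ) 1 := Icc_subset_Icc_right hx.2
  refine intervalIntegral.integral_mono_on hx.1 (AntitoneOn.intervalIntegrable ?_)
    (Continuous.intervalIntegrable (by fun_prop) 0 x) fun s hs => hle s (hsub hs)
  exact hI.antitoneOn.mono (by rwa [uIcc_of_le hx.1])

theorem integral_mul_indicator_Iic {a b S : ℝ} (φ Q : ℝ → ℝ) (hS : S ∈ Icc a b) :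
    ∫ s in a..b, φ s * (Iic S).indicator Q s = ∫ s in a..S, φ s * Q s := by
  simp only [← indicator_mul_right]
  exact intervalIntegral.integral_indicator hS

theorem exists_optimal_reserve (n : ℕ) {g h : ℝ → ℝ} (hg : AntitoneOn g (Ioo 0 1))
    (hh : AntitoneOn h (Ioo 0 1)) (hgi : IntegrableOn g (Ioo 0 1))
    (hhi : IntegrableOn h (Ioo 0 1)) :
    ∃ S : ℝ, S ∈ Icc (0 : ℝ) 1 ∧ ∃ Phat : ℝ → ℝ,
      (∀ s ∈ Icc (0 : ℝ) 1,
        (s ≤ S → Phat s = (1 - s) ^ (n - 1)) ∧ (S < s → Phat s = 0)) ∧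
      Feasible n Phat ∧
      0 ≤ (∫ s in (0 : ℝ)..1, g s * Phat s) ∧
      ∀ P : ℝ → ℝ, Feasible n P → 0 ≤ (∫ s in (0 : ℝ)..1, g s * P s) →
        (∫ s in (0 : ℝ)..1, h s * P s) ≤ ∫ s in (0 : ℝ)..1, h s * Phat s := by
  rw [← intervalIntegrable_iff_integrableOn_Ioo_of_le zero_le_one] at hgi hhi
  obtain ⟨S, hS, hgS, hopt⟩ :=
    (isAllocationOn_one_sub_pow (n - 1)).exists_optimal_cutoff zero_le_one hg hh hgi hhi
  refine ⟨S, hS, (Iic S).indicator fun s => (1 - s) ^ (n - 1),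
    fun s _ => ⟨fun hs => indicator_of_mem (mem_Iic.2 hs) _,
      fun hs => indicator_of_notMem (notMem_Iic.2 hs) _⟩,
    feasible_indicator_Iic n S, ?_, fun P hP hgP => ?_⟩
  · rwa [integral_mul_indicator_Iic _ _ hS]
  · rw [integral_mul_indicator_Iic _ _ hS]
    exact hopt P hP.isAllocationOn hP.weaklyMajorizedOn hgP

end Feasible

section VirtualSurplus

variable {a b γ : ℝ} {F q u v : ℝ → ℝ}

/-- The weighted virtual surplus of a supplier of cost `x`, with weight `γ` on the buyer's payoff
and `1 - γ` on social surplus; `γ = 1` gives the buyer's own virtual surplus. It is a function of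
the cost, and composing it with the quantile function gives the `gt` and `ht` of the theorem. -/
noncomputable def virtualSurplus (F v : ℝ → ℝ) (γ x : ℝ) : ℝ :=
  v x - x - γ * (F x / deriv F x)

theorem monotoneOn_div_deriv_of_concaveOn_log {D : Set ℝ}
    (hlog : ConcaveOn ℝ D fun x => Real.log (F x)) (hF : ∀ x ∈ D, 0 < F x)
    (hF' : ∀ x ∈ D, 0 < deriv F x) : MonotoneOn (fun x => F x / deriv F x) D := by
  have hderiv : ∀ x ∈ D, HasDerivAt (fun x => Real.log (F x)) (deriv F x / F x) x := fun x hx =>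
    (differentiableAt_of_deriv_ne_zero (hF' x hx).ne').hasDerivAt.log (hF x hx).ne'
  have hanti := hlog.antitoneOn_deriv fun x hx => (hderiv x hx).differentiableAt
  intro x hx y hy hxy
  have hle : deriv F y / F y ≤ deriv F x / F x := by
    simpa only [(hderiv x hx).deriv, (hderiv y hy).deriv] using hanti hx hy hxy
  simpa only [inv_div] using inv_anti₀ (div_pos (hF' y hy) (hF y hy)) hle

theorem antitoneOn_virtualSurplus {D : Set ℝ} (hv : AntitoneOn (fun x => v x - x) D)
    (hF : MonotoneOn (fun x => F x / deriv F x) D) (hγ : 0 ≤ γ) :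
    AntitoneOn (virtualSurplus F v γ) D := fun _ hx _ hy hxy =>
  sub_le_sub (hv hx hy hxy) (mul_le_mul_of_nonneg_left (hF hx hy hxy) hγ)

theorem integrableOn_comp_rightInvOn_iff {s t : Set ℝ} {F' φ : ℝ → ℝ} (hs : MeasurableSet s)
    (hF : ∀ x ∈ s, HasDerivWithinAt F (F' x) s x) (hinj : InjOn F s) (hFst : MapsTo F s t)
    (hq : MapsTo q t s) (hqF : RightInvOn q F t) :
    IntegrableOn (fun y => φ (q y)) t ↔ IntegrableOn (fun x => |F' x| * φ x) s := by
  have himage : F '' s = t := (hqF.surjOn hq).image_eq_of_mapsTo hFst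
  have hleft : LeftInvOn q F s := hinj.rightInvOn_of_leftInvOn hqF hFst hq
  rw [← himage, integrableOn_image_iff_integrableOn_abs_deriv_smul hs hF hinj]
  refine integrableOn_congr_fun (fun x hx => ?_) hs
  simp only [hleft hx, smul_eq_mul]

theorem integrableOn_comp_of_antitoneOn {t : Set ℝ} (ht : MeasurableSet t) (htv : volume t < ⊤)
    (hu : AntitoneOn u (Icc a b)) (hq : MonotoneOn q t) (hqt : MapsTo q t (Icc a b)) :
    IntegrableOn (fun s => u (q s)) t := by
  refine IntegrableOn.of_bound htv ?_ (max |u b| |u a|) ?_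
  · exact (aemeasurable_restrict_of_antitoneOn ht
      (hu.comp_MonotoneOn hq hqt)).aestronglyMeasurable
  · refine ae_restrict_of_forall_mem ht fun s hs => ?_
    have hmem := hqt hs
    have hab : a ≤ b := hmem.1.trans hmem.2
    exact abs_le_max_abs_abs (hu hmem (right_mem_Icc.2 hab) hmem.2)
      (hu (left_mem_Icc.2 hab) hmem hmem.1)

theorem integrableOn_div_deriv_comp_quantile (hF : ContinuousOn F (Icc a b))
    (hF' : ∀ x ∈ Ioo a b, 0 < deriv F x) (hq : MapsTo q (Ioo (F a) (F b)) (Ioo a b))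
    (hqF : RightInvOn q F (Ioo (F a) (F b))) :
    IntegrableOn (fun s => F (q s) / deriv F (q s)) (Ioo (F a) (F b)) := by
  have hmono : StrictMonoOn F (Icc a b) :=
    strictMonoOn_of_deriv_pos (convex_Icc a b) hF (by rwa [interior_Icc])
  have hderiv : ∀ x ∈ Ioo a b, HasDerivWithinAt F (deriv F x) (Ioo a b) x := fun x hx =>
    (differentiableAt_of_deriv_ne_zero (hF' x hx).ne').hasDerivAt.hasDerivWithinAt
  rw [integrableOn_comp_rightInvOn_iff (φ := fun x => F x / deriv F x) measurableSet_Ioo hderiv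
    (hmono.injOn.mono Ioo_subset_Icc_self) hmono.mapsTo_Ioo hq hqF]
  refine (hF.integrableOn_Icc.mono_set Ioo_subset_Icc_self).congr_fun (fun x hx => ?_)
    measurableSet_Ioo
  rw [abs_of_pos (hF' x hx), mul_div_cancel₀ _ (hF' x hx).ne']

theorem antitoneOn_virtualSurplus_comp_quantile (hF : MonotoneOn F (Icc a b))
    (hlog : ConcaveOn ℝ (Ioo a b) fun x => Real.log (F x)) (hF0 : ∀ x ∈ Ioo a b, 0 < F x)
    (hF' : ∀ x ∈ Ioo a b, 0 < deriv F x) (hv : AntitoneOn (fun x => v x - x) (Icc a b))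
    (hq : MapsTo q (Ioo (F a) (F b)) (Ioo a b)) (hqF : RightInvOn q F (Ioo (F a) (F b)))
    (hγ : 0 ≤ γ) :
    AntitoneOn (fun s => virtualSurplus F v γ (q s)) (Ioo (F a) (F b)) :=
  (antitoneOn_virtualSurplus (hv.mono Ioo_subset_Icc_self)
    (monotoneOn_div_deriv_of_concaveOn_log hlog hF0 hF') hγ).comp_MonotoneOn
    (Function.monotoneOn_of_rightInvOn_of_mapsTo (hF.mono Ioo_subset_Icc_self) hqF hq) hq

theorem integrableOn_virtualSurplus_comp_quantile (hF : ContinuousOn F (Icc a b))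
    (hF' : ∀ x ∈ Ioo a b, 0 < deriv F x) (hv : AntitoneOn (fun x => v x - x) (Icc a b))
    (hq : MapsTo q (Ioo (F a) (F b)) (Ioo a b)) (hqF : RightInvOn q F (Ioo (F a) (F b)))
    (γ : ℝ) :
    IntegrableOn (fun s => virtualSurplus F v γ (q s)) (Ioo (F a) (F b)) := by
  have hmono : MonotoneOn F (Icc a b) :=
    (strictMonoOn_of_deriv_pos (convex_Icc a b) hF (by rwa [interior_Icc])).monotoneOn
  have hqmono : MonotoneOn q (Ioo (F a) (F b)) :=
    Function.monotoneOn_of_rightInvOn_of_mapsTo (hmono.mono Ioo_subset_Icc_self) hqF hq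
  exact (integrableOn_comp_of_antitoneOn measurableSet_Ioo measure_Ioo_lt_top hv hqmono
    (hq.mono_right Ioo_subset_Icc_self)).sub
    ((integrableOn_div_deriv_comp_quantile hF hF' hq hqF).const_mul γ)

end VirtualSurplus

/-- In this version `n` counts the rivals of a supplier, so there are `n + 1` suppliers. -/
theorem stmt_14_general (n : ℕ) (F : ℝ → ℝ) (hF : ContinuousOn F (Icc 0 1))
    (hF0 : F 0 = 0) (hF1 : F 1 = 1) (hf_pos : ∀ x ∈ Ioo (0 : ℝ) 1, 0 < deriv F x)
    (hlogF : ConcaveOn ℝ (Ioo 0 1) fun x => Real.log (F x))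
    (v : ℝ → ℝ) (hvx : AntitoneOn (fun x => v x - x) (Icc 0 1)) (γ : ℝ) (hγ : 0 ≤ γ)
    (Finv : ℝ → ℝ) (hFinv : ∀ s ∈ Ioo (0 : ℝ) 1, Finv s ∈ Ioo (0 : ℝ) 1 ∧ F (Finv s) = s)
    (gt ht : ℝ → ℝ)
    (hgt : ∀ s ∈ Ioo (0 : ℝ) 1,
      gt s = v (Finv s) - Finv s - F (Finv s) / deriv F (Finv s))
    (hht : ∀ s ∈ Ioo (0 : ℝ) 1,
      ht s = v (Finv s) - Finv s - γ * (F (Finv s) / deriv F (Finv s))) :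
    ∃ S0 : ℝ, S0 ∈ Icc (0 : ℝ) 1 ∧ ∃ Phat : ℝ → ℝ,
      (∀ s ∈ Icc (0 : ℝ) 1,
        (s ≤ S0 → Phat s = (1 - s) ^ n) ∧ (S0 < s → Phat s = 0)) ∧
      Feasible (n + 1) Phat ∧
      0 ≤ (∫ s in (0 : ℝ)..1, gt s * Phat s) ∧
      ∀ P : ℝ → ℝ, Feasible (n + 1) P → 0 ≤ (∫ s in (0 : ℝ)..1, gt s * P s) →
        (∫ s in (0 : ℝ)..1, ht s * P s) ≤ ∫ s in (0 : ℝ)..1, ht s * Phat s := by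
  have hmono : StrictMonoOn F (Icc 0 1) :=
    strictMonoOn_of_deriv_pos (convex_Icc 0 1) hF (by rwa [interior_Icc])
  have hpos : ∀ x ∈ Ioo (0 : ℝ) 1, 0 < F x := fun x hx =>
    hF0.ge.trans_lt (hmono.mapsTo_Ioo hx).1
  have hIoo : Ioo (F 0) (F 1) = Ioo 0 1 := by rw [hF0, hF1]
  have hq : MapsTo Finv (Ioo (F 0) (F 1)) (Ioo 0 1) := fun s hs => (hFinv s (hIoo ▸ hs)).1
  have hqF : RightInvOn Finv F (Ioo (F 0) (F 1)) := fun s hs => (hFinv s (hIoo ▸ hs)).2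
  have hanti {c : ℝ} (hc : 0 ≤ c) := hIoo ▸ antitoneOn_virtualSurplus_comp_quantile
    hmono.monotoneOn hlogF hpos hf_pos hvx hq hqF hc
  have hint (c : ℝ) := hIoo ▸ integrableOn_virtualSurplus_comp_quantile hF hf_pos hvx hq hqF c
  have hg : EqOn (fun s => virtualSurplus F v 1 (Finv s)) gt (Ioo 0 1) := fun s hs => by
    simp only [virtualSurplus, one_mul, hgt s hs]
  have hh : EqOn (fun s => virtualSurplus F v γ (Finv s)) ht (Ioo 0 1) := fun s hs =>
    (hht s hs).symm
  exact exists_optimal_reserve (n + 1) ((hanti zero_le_one).congr hg) ((hanti hγ).congr hh)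
    ((hint 1).congr_fun hg measurableSet_Ioo) ((hint γ).congr_fun hh measurableSet_Ioo)

/-- **Corollary: second-price auction with reserve is optimal.**
Under log-concavity of `F` and `1−F` and strictly decreasing `v(x) − x`, for any
weight `γ ∈ [0,1]` there is a quantile cutoff `S₀` such that the cutoff allocation
`P̂(s) = (1−s)^{n−1}` for `s ≤ S₀`, `= 0` for `s > S₀`, is feasible, satisfies the
buyer's IR constraint `∫₀¹ g̃ P̂ ≥ 0`, and maximizes `∫₀¹ h̃_γ P` over all feasible
`P` with `∫₀¹ g̃ P ≥ 0`. -/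
theorem stmt_14 (n : ℕ) (hn : 2 ≤ n)
    (F : ℝ → ℝ)
    (hF : ContDiffOn ℝ 2 F (Icc (0:ℝ) 1))
    (hF0 : F 0 = 0) (hF1 : F 1 = 1)
    (hf_pos : ∀ x ∈ Ioo (0:ℝ) 1, 0 < deriv F x)
    (hlogF : ConcaveOn ℝ (Ioo (0:ℝ) 1) fun x => Real.log (F x))
    (hlog1F : ConcaveOn ℝ (Ioo (0:ℝ) 1) fun x => Real.log (1 - F x))
    (v : ℝ → ℝ) (hv : ContinuousOn v (Icc (0:ℝ) 1))
    (hvx : StrictAntiOn (fun x => v x - x) (Icc (0:ℝ) 1))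
    (γ : ℝ) (hγ : γ ∈ Icc (0:ℝ) 1)
    (Finv : ℝ → ℝ)
    (hFinv : ∀ s ∈ Ioo (0:ℝ) 1, Finv s ∈ Ioo (0:ℝ) 1 ∧ F (Finv s) = s)
    (gt ht : ℝ → ℝ)
    (hgt : ∀ s ∈ Ioo (0:ℝ) 1,
      gt s = v (Finv s) - Finv s - F (Finv s) / deriv F (Finv s))
    (hht : ∀ s ∈ Ioo (0:ℝ) 1,
      ht s = v (Finv s) - Finv s - γ * (F (Finv s) / deriv F (Finv s))) :
    ∃ S0 : ℝ, S0 ∈ Icc (0:ℝ) 1 ∧ ∃ Phat : ℝ → ℝ,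
      (∀ s ∈ Icc (0:ℝ) 1,
        (s ≤ S0 → Phat s = (1 - s) ^ (n - 1)) ∧ (S0 < s → Phat s = 0)) ∧
      Feasible n Phat ∧
      0 ≤ (∫ s in (0:ℝ)..1, gt s * Phat s) ∧
      ∀ P : ℝ → ℝ, Feasible n P → 0 ≤ (∫ s in (0:ℝ)..1, gt s * P s) →
        (∫ s in (0:ℝ)..1, ht s * P s) ≤ ∫ s in (0:ℝ)..1, ht s * Phat s := by
  obtain ⟨m, rfl⟩ := Nat.exists_eq_add_of_le' (one_le_two.trans hn)
  exact stmt_14_general m F hF.continuousOn hF0 hF1 hf_pos hlogF v hvx.antitoneOn γ hγ.1 Finv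
    hFinv gt ht hgt hht
end
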